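/- In the setting of stopping rules for a finite-state discrete-time Markov chain [see context], let K^p : {0,…,N} → ℝ and F ∈ ℝ, and define the reward g : {0,…,N} → ℝ by g(n) := K^p(n) for n < N and g(N) := max(F, K^p(N)). Define V : {0,…,N} × {1,…,m} → ℝ backward by V(N, x) := max(F, K^p(N)) and V(n, x) := max( K^p(n), ∑_{y=1}^{m} (P_{n+1})_{x,y} · γ_y · V(n+1, y) ) for 0 ≤ n < N. Then V(0, j) is the greatest element of the set { Val(τ) : τ an adapted stopping rule }: Val(τ) ≤ V(0, j) for every adapted stopping rule τ, and there exists an adapted stopping rule τ* with Val(τ*) = V(0, j). -/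

import Mathlib

open Matrix

/-- The path `(w_0, w_1, …, w_N)` started at `j` determined by the choices `(w_1, …, w_N)`. -/
def seqFrom {m N : ℕ} (j : Fin m) (w : Fin N → Fin m) : Fin (N + 1) → Fin m :=
  Fin.cases j w

/-- Probability weight `wt(w) = ∏_{n=1}^N (P_n)_{w_{n−1} w_n}` of the path started at `j`
with choices `w` (the `n`-th step, 0-indexed `n-1`, uses `P (n-1)`). -/
noncomputable def pathWt {m N : ℕ} (j : Fin m) (P : ℕ → Matrix (Fin m) (Fin m) ℝ)
    (w : Fin N → Fin m) : ℝ :=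
  ∏ n : Fin N, P n.val (seqFrom j w n.castSucc) (seqFrom j w n.succ)

/-- A stopping rule `τ` (valued in `{0,…,N}`) is adapted: whether `τ ≤ n` only depends on
the path up to time `n`. -/
def AdaptedRule {m N : ℕ} (τ : (Fin N → Fin m) → ℕ) : Prop :=
  (∀ w, τ w ≤ N) ∧
    ∀ n : ℕ, ∀ w w' : Fin N → Fin m,
      (∀ i : Fin N, (i : ℕ) < n → w i = w' i) → (τ w ≤ n ↔ τ w' ≤ n)

/-- Discounted expected reward `Val(τ) = ∑_w wt(w) (∏_{i=1}^{τ(w)} γ_{w_i}) g(τ(w))`. -/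
noncomputable def ruleValue {m N : ℕ} (j : Fin m) (P : ℕ → Matrix (Fin m) (Fin m) ℝ)
    (γ : Fin m → ℝ) (g : ℕ → ℝ) (τ : (Fin N → Fin m) → ℕ) : ℝ :=
  ∑ w : Fin N → Fin m,
    pathWt j P w * (∏ i : Fin N, if (i : ℕ) < τ w then γ (w i) else 1) * g (τ w)

/-- Backward recursion for the putable bond: `snellPut q x = V(N − q, x)`, i.e.
`V(N, x) = max(F, K^p(N))` and
`V(n, x) = max(K^p(n), ∑_y (P_{n+1})_{x,y} γ_y V(n+1, y))` for `n < N`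
(0-indexed, the matrix used in the step from time `n` is `P n`). -/
noncomputable def snellPut {m : ℕ} (N : ℕ) (P : ℕ → Matrix (Fin m) (Fin m) ℝ)
    (γ : Fin m → ℝ) (Kp : ℕ → ℝ) (F : ℝ) : ℕ → Fin m → ℝ
  | 0, _ => max F (Kp N)
  | q + 1, x =>
      max (Kp (N - (q + 1)))
        (∑ y : Fin m, P (N - (q + 1)) x y * γ y * snellPut N P γ Kp F q y)

/-!
First-step analysis. An adapted rule with horizon `N + 1` decides at time `0` without looking at the
path, so it either stops there on every path or takes one step to some `y` and continues with an
arbitrary adapted rule `σ y` with horizon `N`. In the first case its value is `g 0`, in the second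
it is a nonnegative combination over `y` of the values of the `σ y`. Since the `σ y` can be chosen
independently of each other, the best value is the maximum of `g 0` and the same combination of the
best continuation values, which is the backward recursion.
-/

theorem isGreatest_univ_pi {ι : Type*} {α : ι → Type*} [∀ i, Preorder (α i)]
    {s : ∀ i, Set (α i)} {a : ∀ i, α i} (h : ∀ i, IsGreatest (s i) (a i)) :
    IsGreatest (Set.univ.pi s) a :=
  ⟨fun i _ => (h i).1, fun _ hb i => (h i).2 (hb i (Set.mem_univ i))⟩

theorem sum_pi_fin_succ {M : Type*} [AddCommMonoid M] {n : ℕ} {α : Fin (n + 1) → Type*}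
    [∀ i, Fintype (α i)] (f : (∀ i, α i) → M) :
    ∑ w, f w = ∑ a, ∑ w : ∀ i : Fin n, α i.succ, f (Fin.cons a w) := by
  rw [← (Fin.consEquiv α).sum_comp f, Fintype.sum_prod_type]
  rfl

section AdaptedRules

variable {m N : ℕ}

theorem adaptedRule_zero : AdaptedRule (0 : (Fin N → Fin m) → ℕ) :=
  ⟨fun _ => Nat.zero_le N, fun _ _ _ _ => Iff.rfl⟩

theorem AdaptedRule.eq_zero_of_apply_eq_zero {τ : (Fin N → Fin m) → ℕ} (hτ : AdaptedRule τ)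
    {w₀ : Fin N → Fin m} (hw₀ : τ w₀ = 0) : τ = 0 :=
  funext fun w => Nat.le_zero.mp <|
    (hτ.2 0 w₀ w fun i hi => absurd hi (Nat.not_lt_zero i)).mp hw₀.le

/-- The rule that does not stop at time `0` and, if the first step leads to `y`, applies the rule
`σ y` to the rest of the path. -/
def continueWith (σ : Fin m → (Fin N → Fin m) → ℕ) (w : Fin (N + 1) → Fin m) : ℕ :=
  σ (w 0) (Fin.tail w) + 1

theorem exists_eq_continueWith {τ : (Fin (N + 1) → Fin m) → ℕ} (h : ∀ w, τ w ≠ 0) :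
    ∃ σ, τ = continueWith σ :=
  ⟨fun y w => τ (Fin.cons y w) - 1, funext fun w => by
    simp [continueWith, Nat.sub_add_cancel (Nat.pos_of_ne_zero (h w))]⟩

theorem adaptedRule_continueWith_iff {σ : Fin m → (Fin N → Fin m) → ℕ} :
    AdaptedRule (continueWith σ) ↔ ∀ y, AdaptedRule (σ y) := by
  constructor
  · intro h y
    refine ⟨fun w => Nat.succ_le_succ_iff.mp (h.1 (Fin.cons y w)), fun n w w' hw => ?_⟩
    have hcons : ∀ i : Fin (N + 1), (i : ℕ) < n + 1 →
        (Fin.cons y w : Fin (N + 1) → Fin m) i = (Fin.cons y w' : Fin (N + 1) → Fin m) i :=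
      Fin.cases (fun _ => rfl) fun i hi => hw i (Nat.succ_lt_succ_iff.mp hi)
    simpa [continueWith] using h.2 (n + 1) (Fin.cons y w) (Fin.cons y w') hcons
  · intro h
    refine ⟨fun w => Nat.succ_le_succ ((h (w 0)).1 (Fin.tail w)), fun n w w' hw => ?_⟩
    cases n with
    | zero => simp [continueWith]
    | succ n =>
      have htail := (h (w 0)).2 n (Fin.tail w) (Fin.tail w')
        fun i hi => hw i.succ (Nat.succ_lt_succ hi)
      simpa [continueWith, ← hw 0 n.succ_pos] using htail

theorem adaptedRule_horizon_zero_iff {τ : (Fin 0 → Fin m) → ℕ} : AdaptedRule τ ↔ τ = 0 :=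
  ⟨fun h => funext fun w => Nat.le_zero.mp (h.1 w), fun h => h ▸ adaptedRule_zero⟩

theorem adaptedRule_horizon_succ_iff {τ : (Fin (N + 1) → Fin m) → ℕ} :
    AdaptedRule τ ↔ τ = 0 ∨ ∃ σ, (∀ y, AdaptedRule (σ y)) ∧ τ = continueWith σ := by
  constructor
  · intro hτ
    by_cases h : ∃ w, τ w = 0
    · obtain ⟨w₀, hw₀⟩ := h
      exact Or.inl (hτ.eq_zero_of_apply_eq_zero hw₀)
    · obtain ⟨σ, rfl⟩ := exists_eq_continueWith (not_exists.mp h)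
      exact Or.inr ⟨σ, adaptedRule_continueWith_iff.mp hτ, rfl⟩
  · rintro (rfl | ⟨σ, hσ, rfl⟩)
    · exact adaptedRule_zero
    · exact adaptedRule_continueWith_iff.mpr hσ

end AdaptedRules

section Values

variable {m N : ℕ}

theorem pathWt_cons (j y : Fin m) (P : ℕ → Matrix (Fin m) (Fin m) ℝ) (w : Fin N → Fin m) :
    pathWt j P (Fin.cons y w : Fin (N + 1) → Fin m) =
      P 0 j y * pathWt y (fun n => P (n + 1)) w :=
  Fin.prod_univ_succ _

theorem sum_pathWt {P : ℕ → Matrix (Fin m) (Fin m) ℝ} (hP : ∀ n < N, ∀ x, ∑ y, P n x y = 1)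
    (j : Fin m) :
    ∑ w : Fin N → Fin m, pathWt j P w = 1 := by
  induction N generalizing P j with
  | zero => simp [pathWt]
  | succ N ih =>
    have htail (y : Fin m) : ∑ w : Fin N → Fin m, pathWt y (fun n => P (n + 1)) w = 1 :=
      ih (fun n hn => hP (n + 1) (Nat.succ_lt_succ hn)) y
    simp only [sum_pi_fin_succ, pathWt_cons, ← Finset.mul_sum, htail, mul_one]
    exact hP 0 N.succ_pos j

theorem ruleValue_zero {P : ℕ → Matrix (Fin m) (Fin m) ℝ}
    (hP : ∀ n < N, ∀ x, ∑ y, P n x y = 1) (γ : Fin m → ℝ) (g : ℕ → ℝ) (j : Fin m) :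
    ruleValue j P γ g (0 : (Fin N → Fin m) → ℕ) = g 0 := by
  simp [ruleValue, ← Finset.sum_mul, sum_pathWt hP]

theorem ruleValue_continueWith (j : Fin m) (P : ℕ → Matrix (Fin m) (Fin m) ℝ) (γ : Fin m → ℝ)
    (g : ℕ → ℝ) (σ : Fin m → (Fin N → Fin m) → ℕ) :
    ruleValue j P γ g (continueWith σ) =
      ∑ y, P 0 j y * γ y * ruleValue y (fun n => P (n + 1)) γ (fun n => g (n + 1)) (σ y) := by
  simp only [ruleValue, sum_pi_fin_succ, Finset.mul_sum]
  refine Finset.sum_congr rfl fun y _ => Finset.sum_congr rfl fun w _ => ?_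
  have hdiscount :
      (∏ i : Fin (N + 1), if (i : ℕ) < σ y w + 1 then γ (Fin.cons (α := fun _ => Fin m) y w i)
        else 1) = γ y * ∏ i : Fin N, if (i : ℕ) < σ y w then γ (w i) else 1 := by
    simp [Fin.prod_univ_succ]
  simp only [continueWith, Fin.cons_zero, Fin.tail_cons, pathWt_cons, hdiscount]
  ring

/-- The values `Val(τ)` of the adapted stopping rules `τ` with horizon `N` along paths started at
`j`. Optimal stopping asks for the greatest element of this set. -/
def stoppingValues (N : ℕ) (P : ℕ → Matrix (Fin m) (Fin m) ℝ) (γ : Fin m → ℝ) (g : ℕ → ℝ)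
    (j : Fin m) : Set ℝ :=
  ruleValue j P γ g '' {τ : (Fin N → Fin m) → ℕ | AdaptedRule τ}

theorem stoppingValues_zero (P : ℕ → Matrix (Fin m) (Fin m) ℝ) (γ : Fin m → ℝ) (g : ℕ → ℝ)
    (j : Fin m) : stoppingValues 0 P γ g j = {g 0} := by
  simp [stoppingValues, adaptedRule_horizon_zero_iff, ruleValue_zero]

theorem stoppingValues_succ {P : ℕ → Matrix (Fin m) (Fin m) ℝ}
    (hP : ∀ n < N + 1, ∀ x, ∑ y, P n x y = 1) (γ : Fin m → ℝ) (g : ℕ → ℝ) (j : Fin m) :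
    stoppingValues (N + 1) P γ g j =
      insert (g 0) ((fun v : Fin m → ℝ => ∑ y, P 0 j y * γ y * v y) '' Set.univ.pi
        (stoppingValues N (fun n => P (n + 1)) γ fun n => g (n + 1))) := by
  ext v
  constructor
  · rintro ⟨τ, hτ, rfl⟩
    obtain rfl | ⟨σ, hσ, rfl⟩ := adaptedRule_horizon_succ_iff.mp hτ
    · exact Or.inl (ruleValue_zero hP γ g j)
    · exact Or.inr ⟨_, fun y _ => ⟨σ y, hσ y, rfl⟩, (ruleValue_continueWith j P γ g σ).symm⟩
  · rintro (rfl | ⟨u, hu, rfl⟩)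
    · exact ⟨0, adaptedRule_zero, ruleValue_zero hP γ g j⟩
    · choose σ hσ hσu using fun y => hu y (Set.mem_univ y)
      refine ⟨continueWith σ, adaptedRule_continueWith_iff.mpr hσ, ?_⟩
      simp only [ruleValue_continueWith, hσu]

end Values

section SnellEnvelope

variable {m N : ℕ}

/-- The value at time `0` of the Snell envelope of the discounted reward `g`, as a function of the
horizon, the transition matrices, the reward and the initial state. Instead of letting time run
backward from a fixed horizon, the recursion shortens the horizon and shifts `P` and `g` by one. -/
noncomputable def snellEnvelope (γ : Fin m → ℝ) :
    ℕ → (ℕ → Matrix (Fin m) (Fin m) ℝ) → (ℕ → ℝ) → Fin m → ℝ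
  | 0, _, g, _ => g 0
  | N + 1, P, g, x =>
      max (g 0)
        (∑ y, P 0 x y * γ y * snellEnvelope γ N (fun n => P (n + 1)) (fun n => g (n + 1)) y)

theorem isGreatest_snellEnvelope {P : ℕ → Matrix (Fin m) (Fin m) ℝ}
    (hPnn : ∀ n < N, ∀ x y, 0 ≤ P n x y) (hProw : ∀ n < N, ∀ x, ∑ y, P n x y = 1)
    {γ : Fin m → ℝ} (hγ : ∀ i, 0 ≤ γ i) (g : ℕ → ℝ) (j : Fin m) :
    IsGreatest (stoppingValues N P γ g j) (snellEnvelope γ N P g j) := by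
  induction N generalizing P g j with
  | zero =>
    rw [stoppingValues_zero]
    exact isGreatest_singleton
  | succ N ih =>
    have htail (y : Fin m) := ih (fun n hn => hPnn (n + 1) (Nat.succ_lt_succ hn))
      (fun n hn => hProw (n + 1) (Nat.succ_lt_succ hn)) (fun n => g (n + 1)) y
    have hmono : Monotone fun v : Fin m → ℝ => ∑ y, P 0 j y * γ y * v y := fun _ _ h =>
      dotProduct_le_dotProduct_of_nonneg_left h
        fun y => mul_nonneg (hPnn 0 N.succ_pos j y) (hγ y)
    rw [stoppingValues_succ hProw]
    exact (hmono.map_isGreatest (isGreatest_univ_pi htail)).insert (g 0)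

theorem snellPut_eq_snellEnvelope (P : ℕ → Matrix (Fin m) (Fin m) ℝ) (γ : Fin m → ℝ)
    {Kp g : ℕ → ℝ} {F : ℝ} (hg : ∀ n < N, g n = Kp n) (hgN : g N = max F (Kp N))
    {n q : ℕ} (hnq : n + q = N) (x : Fin m) :
    snellPut N P γ Kp F q x = snellEnvelope γ q (fun k => P (n + k)) (fun k => g (n + k)) x := by
  induction q generalizing n x with
  | zero =>
    obtain rfl : n = N := hnq
    exact hgN.symm
  | succ q ih =>
    have hn : N - (q + 1) = n := by lia
    have hshift (k : ℕ) : n + 1 + k = n + (k + 1) := by lia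
    simp only [snellPut, snellEnvelope, hn, ih (n := n + 1) (by lia), hshift, Nat.add_zero,
      hg n (by lia)]

end SnellEnvelope

/-- **Proposition 4, putable bond (discrete optimal stopping).**
With reward `g(n) = K^p(n)` for `n < N` and `g(N) = max(F, K^p(N))`, the value `V(0, j)`
of the backward recursion is the greatest element of `{Val(τ) : τ adapted stopping rule}`:
every adapted rule has value `≤ V(0, j)`, and some adapted rule attains it. -/
theorem putable_bond_optimal_stopping (m N : ℕ) (hm : 1 ≤ m) (hN : 1 ≤ N) (j : Fin m)
    (P : ℕ → Matrix (Fin m) (Fin m) ℝ)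
    (hPnn : ∀ n < N, ∀ x y : Fin m, 0 ≤ P n x y)
    (hProw : ∀ n < N, ∀ x : Fin m, ∑ y : Fin m, P n x y = 1)
    (γ : Fin m → ℝ) (hγ : ∀ i, 0 ≤ γ i)
    (Kp : ℕ → ℝ) (F : ℝ)
    (g : ℕ → ℝ) (hg : ∀ n, g n = if n < N then Kp n else max F (Kp N)) :
    (∀ τ : (Fin N → Fin m) → ℕ, AdaptedRule τ →
        ruleValue j P γ g τ ≤ snellPut N P γ Kp F N j) ∧
      (∃ τ : (Fin N → Fin m) → ℕ, AdaptedRule τ ∧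
        ruleValue j P γ g τ = snellPut N P γ Kp F N j) := by
  have hsnell : snellPut N P γ Kp F N j = snellEnvelope γ N P g j := by
    simpa only [Nat.zero_add] using
      snellPut_eq_snellEnvelope P γ (fun n hn => by rw [hg, if_pos hn])
        (by rw [hg, if_neg (lt_irrefl N)]) (Nat.zero_add N) j
  obtain ⟨hattained, hbound⟩ := isGreatest_snellEnvelope hPnn hProw hγ g j
  rw [hsnell]
  exact ⟨fun τ hτ => hbound ⟨τ, hτ, rfl⟩, hattained⟩
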